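/- arXiv:1807.00354 — 3 statements merged into one kernel-verified Lean document; each statement's English description precedes it below -/
import Mathlib

section
/- Let G be a countable group equipped with symmetric probability measures μ_0, …, μ_k. Assume there exists a constant C > 0 such that for each R > 0 and each 0 ≤ i ≤ k there is a subset K_i(R) ⊆ G with ∑_{x∈G} |f(xh) − f(x)|² ≤ C R E_{μ_i}(f,f) for all f ∈ ℓ²(G) and all h ∈ K_i(R). Assume further there are an integer Q ≥ 1, a real γ > 0 and an increasing unbounded function 𝐅 : [1,∞) → (0,∞), regularly varying at infinity of index γ, such that #((∪_{i=0}^k K_i(R))^Q) ≥ 𝐅(R) for all R ≥ 1, where B^Q = {g₁⋯g_Q : g_1,…,g_Q ∈ B} ⊆ G. Set μ = (k+1)^{-1} ∑_{i=0}^k μ_i and 𝐅^{-1}(v) = inf{t ≥ 1 : 𝐅(t) ≥ v}. Then there exist constants c₁, c₂, c₃, c₄ > 0 such that Λ_{2,G,μ}(v) ≥ c₁/𝐅^{-1}(c₂ v) for all v ≥ 1, and μ^{(2n)}(e) ≤ c₃/𝐅(max{c₄ n, 1}) for all integers n ≥ 1. -/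
/-!
The proof runs through a Nash-type inequality valid at every scale `R ≥ 1`:
`‖f‖₂² ≤ L R E_μ(f,f) + ‖f‖₁² / F(R)`.
Elements of `K_i(R)` displace `f` by at most `C (k+1) R E_μ(f,f)` in squared norm, hence so do
products of `Q` of them up to the factor `4 ^ Q` (`displacement_list`). Averaging
`‖f(· g) - f‖₂² = 2‖f‖₂² - 2⟨f, f(· g)⟩` over a set `A` of at least `F(R)` such products, and using
`∑_{g ∈ A} ⟨f, f(· g)⟩ ≤ ‖f‖₁²`, gives the inequality (`nash_of_displacement`).

*Spectral profile.* If `f` has support of size at most `v`, then `‖f‖₁² ≤ v ‖f‖₂²`, so taking `R`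
with `F(R) ≥ 2 v` the last term is absorbed (`spectralProfile_ge_of_nash`).

*Return probability.* Write `a_m = μ^{(m)}(e)` and `b_n = a_{2n} + a_{2n+1}`. For
`g = μ^{(n)} + μ^{(n+1)}` self-adjointness of convolution by `μ` gives
`E_μ(g,g) = b_n - b_{n+1}`, `‖g‖₂² ≥ b_n` and `‖g‖₁ = 2`; since `g` combines two consecutive powers
no laziness of the walk is needed. The Nash inequality becomes
`b_n ≤ L R (b_n - b_{n+1}) + 4 / F(R)`. At a fixed scale `R` this is exponential decay towards
`4 / F(R)`; running it from time `n / 2` to time `n` with `R = δ n`, `δ` small, propagates a bound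
`b_n ≤ c / F(δ n)`, because regular variation makes `F(3t) / F(t)` bounded (`decay_of_nash`).
-/

open scoped BigOperators Classical

noncomputable section

/-- A symmetric probability measure on a discrete group `G`. -/
def IsSymmProb {G : Type*} [Group G] (μ : G → ℝ) : Prop :=
  (∀ g, 0 ≤ μ g) ∧ Summable μ ∧ (∑' g, μ g) = 1 ∧ (∀ g, μ g⁻¹ = μ g)

/-- Convolution powers of `μ` : `convPow μ 0 = δ_e`, `convPow μ (n+1) = (convPow μ n) * μ`. -/
def convPow {G : Type*} [Group G] (μ : G → ℝ) : ℕ → G → ℝ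
  | 0 => fun x => if x = 1 then 1 else 0
  | n + 1 => fun x => ∑' y, convPow μ n y * μ (y⁻¹ * x)

/-- The Dirichlet form of `μ`. -/
def dirichletForm {G : Type*} [Group G] (μ : G → ℝ) (f : G → ℝ) : ℝ :=
  (1 / 2) * ∑' q : G × G, (f (q.1 * q.2) - f q.1) ^ 2 * μ q.2

/-- The spectral profile `Λ_{2,G,μ}`. -/
def spectralProfile {G : Type*} [Group G] (μ : G → ℝ) (v : ℝ) : ℝ :=
  sInf { r : ℝ | ∃ f : G → ℝ, 1 ≤ (Function.support f).ncard ∧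
    ((Function.support f).ncard : ℝ) ≤ v ∧
    r = dirichletForm μ f / ∑' x, (f x) ^ 2 }

/-- Word length with respect to a set `S` of generators. -/
def wordLength {G : Type*} [Group G] (S : Set G) (g : G) : ℕ :=
  sInf { n : ℕ | ∃ l : List G, l.length = n ∧ (∀ x ∈ l, x ∈ S) ∧ l.prod = g }

/-- `F` is regularly varying at infinity of index `γ`. -/
def RegVaryAt (F : ℝ → ℝ) (γ : ℝ) : Prop :=
  ∀ l : ℝ, 0 < l →
    Filter.Tendsto (fun t => F (l * t) / F t) Filter.atTop (nhds (l ^ γ))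

/-- `G` is finitely generated of polynomial volume growth. -/
def HasPolyGrowth (G : Type*) [Group G] : Prop :=
  ∃ (S : Finset G) (D c C : ℝ), (∀ s ∈ S, s⁻¹ ∈ S) ∧
    Subgroup.closure (S : Set G) = ⊤ ∧ 0 < c ∧ c ≤ C ∧
    ∀ r : ℝ, 1 ≤ r →
      c * r ^ D ≤ (({g : G | (wordLength (S : Set G) g : ℝ) ≤ r}).ncard : ℝ) ∧
      (({g : G | (wordLength (S : Set G) g : ℝ) ≤ r}).ncard : ℝ) ≤ C * r ^ D

/-- A norm on the group `G`. -/
def IsGroupNorm {G : Type*} [Group G] (N : G → ℝ) : Prop :=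
  (∀ g, 0 ≤ N g) ∧ N 1 = 0 ∧ (∀ g, N g⁻¹ = N g) ∧ ∀ g h, N (g * h) ≤ N g + N h

/-- A quasi-norm on the group `G`, with quasi-triangle constant `A`. -/
def IsQuasiNorm {G : Type*} [Group G] (N : G → ℝ) (A : ℝ) : Prop :=
  1 ≤ A ∧ (∀ g, 0 ≤ N g) ∧ N 1 = 0 ∧ (∀ g, N g⁻¹ = N g) ∧
    ∀ g h, N (g * h) ≤ A * (N g + N h)

/-- `f ⪯ g` in a neighborhood of infinity. -/
def Preceq (f g : ℝ → ℝ) : Prop :=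
  ∃ c₁ c₂ M : ℝ, 0 < c₁ ∧ 0 < c₂ ∧ ∀ x, M ≤ x → f x ≤ c₁ * g (c₂ * x)

/-- `Φ(t) = t²/∫₀ᵗ 2s/φ(s) ds` for `t ≥ 1`, extended linearly on `[0,1]` with `Φ(0)=0`. -/
def PhiOf (φ : ℝ → ℝ) (t : ℝ) : ℝ :=
  if 1 ≤ t then t ^ 2 / (intervalIntegral (fun s => 2 * s / φ s) 0 t MeasureTheory.volume)
  else t * (1 / (intervalIntegral (fun s => 2 * s / φ s) 0 1 MeasureTheory.volume))

/-- Generalized right-continuous inverse `F⁻¹(v) = inf {t ≥ 1 : F(t) ≥ v}`. -/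
def Finv (F : ℝ → ℝ) (v : ℝ) : ℝ := sInf { t : ℝ | 1 ≤ t ∧ v ≤ F t }

/-- The set of products of exactly `Q` elements of `U`. -/
def prodSet {G : Type*} [Group G] (Q : ℕ) (U : Set G) : Set G :=
  { g | ∃ l : List G, l.length = Q ∧ (∀ x ∈ l, x ∈ U) ∧ l.prod = g }

/-! ### Convolution and the Dirichlet form -/

section Helpers

variable {G : Type*} [Group G]

lemma summable_sq_of_summable {ι : Type*} {f : ι → ℝ} (hf : Summable f) :
    Summable fun x => f x ^ 2 := by
  refine Summable.of_nonneg_of_le (fun x => sq_nonneg _) (fun x => ?_)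
    (hf.abs.mul_left (∑' y, |f y|))
  rw [← sq_abs, sq]
  exact mul_le_mul_of_nonneg_right (hf.abs.le_tsum x fun _ _ => abs_nonneg _) (abs_nonneg _)

lemma summable_prod_mul {ι κ : Type*} {f : ι → ℝ} {g : κ → ℝ} (hf : Summable f)
    (hg : Summable g) : Summable fun p : ι × κ => f p.1 * g p.2 :=
  (Summable.mul_norm hf.norm hg.norm).of_norm

lemma IsSymmProb.le_one {μ : G → ℝ} (hμ : IsSymmProb μ) (g : G) : μ g ≤ 1 := by
  rw [← hμ.2.2.1]
  exact hμ.2.1.le_tsum g fun _ _ => hμ.1 _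

lemma IsSymmProb.symm' {μ : G → ℝ} (hμ : IsSymmProb μ) (x y : G) :
    μ (x⁻¹ * y) = μ (y⁻¹ * x) := by
  rw [← hμ.2.2.2 (y⁻¹ * x)]; simp

/-- The change of variables `(x, y) ↦ (x, x⁻¹ y)` on `G × G`. -/
def shear (G : Type*) [Group G] : G × G ≃ G × G :=
  Equiv.prodShear (Equiv.refl G) fun x => Equiv.mulLeft x⁻¹

lemma hasSum_shear {f μ : G → ℝ} (hf : Summable f) (hμ : Summable μ) :
    HasSum (fun p : G × G => f p.1 * μ (p.1⁻¹ * p.2)) ((∑' x, f x) * ∑' x, μ x) := by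
  have h := summable_prod_mul hf hμ
  have h2 := (shear G).hasSum_iff.mpr h.hasSum
  rw [← hf.tsum_mul_tsum hμ h] at h2
  exact h2

lemma hasSum_shear_swap {f μ : G → ℝ} (hf : Summable f) (hμ : IsSymmProb μ) :
    HasSum (fun p : G × G => f p.2 * μ (p.1⁻¹ * p.2)) (∑' x, f x) := by
  have h := (Equiv.prodComm G G).hasSum_iff.mpr (hasSum_shear hf hμ.2.1)
  rw [hμ.2.2.1, mul_one] at h
  refine h.congr_fun ?_
  intro p
  simp [hμ.symm' p.1 p.2]

/-- Right convolution by `μ`, i.e. the Markov operator of the random walk. -/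
def conv (μ f : G → ℝ) : G → ℝ := fun x => ∑' y, f y * μ (y⁻¹ * x)

lemma conv_hasSum {μ f : G → ℝ} (hμ : IsSymmProb μ) (hf : Summable f) :
    HasSum (conv μ f) (∑' x, f x) := by
  have h := (hasSum_shear_swap hf hμ)
  have h1 : HasSum (fun x => ∑' y, f y * μ (x⁻¹ * y)) (∑' x, f x) := by
    refine h.prod_fiberwise fun x => ?_
    exact (h.summable.prod_factor x).hasSum
  convert h1 using 2 with x
  unfold conv
  simp_rw [hμ.symm' x]

lemma summable_kernel {μ f g : G → ℝ} (hμ : IsSymmProb μ) (hf : Summable f) (hg : Summable g) :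
    Summable fun p : G × G => f p.1 * g p.2 * μ (p.1⁻¹ * p.2) := by
  refine Summable.of_norm_bounded (summable_prod_mul hf hg).abs fun p => ?_
  rw [norm_mul, Real.norm_eq_abs, Real.norm_eq_abs, abs_of_nonneg (hμ.1 _)]
  exact mul_le_of_le_one_right (abs_nonneg _) (hμ.le_one _)

lemma tsum_mul_conv {μ f g : G → ℝ} (hμ : IsSymmProb μ) (hf : Summable f) (hg : Summable g) :
    ∑' x, f x * conv μ g x = ∑' p : G × G, f p.1 * g p.2 * μ (p.1⁻¹ * p.2) := by
  rw [(summable_kernel hμ hf hg).tsum_prod]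
  refine tsum_congr fun x => ?_
  unfold conv
  rw [← tsum_mul_left]
  refine tsum_congr fun y => ?_
  simp only
  rw [hμ.symm' x y]; ring

/-- Convolution by a symmetric measure is self-adjoint. -/
lemma conv_selfAdjoint {μ f g : G → ℝ} (hμ : IsSymmProb μ) (hf : Summable f) (hg : Summable g) :
    ∑' x, f x * conv μ g x = ∑' x, conv μ f x * g x := by
  simp_rw [mul_comm (conv μ f _)]
  rw [tsum_mul_conv hμ hf hg, tsum_mul_conv hμ hg hf, ← (Equiv.prodComm G G).tsum_eq]
  refine tsum_congr fun p => ?_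
  simp only [Equiv.prodComm_apply, Prod.fst_swap, Prod.snd_swap]
  rw [hμ.symm']; ring

lemma hasSum_dirichlet {μ f : G → ℝ} (hμ : IsSymmProb μ) (hf : Summable f) :
    HasSum (fun q : G × G => (f (q.1 * q.2) - f q.1) ^ 2 * μ q.2)
      (2 * (∑' x, f x ^ 2 - ∑' x, f x * conv μ f x)) := by
  have h2 := summable_sq_of_summable hf
  have a := hasSum_shear h2 hμ.2.1
  have b := hasSum_shear_swap h2 hμ
  have c := (summable_kernel hμ hf hf).hasSum
  rw [← tsum_mul_conv hμ hf hf] at c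
  rw [hμ.2.2.1] at a
  rw [← (shear G).hasSum_iff]
  rw [show ∀ u w : ℝ, 2 * (u - w) = u * 1 + u - 2 * w from fun u w => by ring]
  refine ((a.add b).sub (c.mul_left 2)).congr_fun fun p => ?_
  simp only [shear, Function.comp, Equiv.prodShear_apply, Equiv.refl_apply, Equiv.coe_mulLeft,
    mul_inv_cancel_left]
  ring

lemma dirichletForm_eq {μ f : G → ℝ} (hμ : IsSymmProb μ) (hf : Summable f) :
    dirichletForm μ f = ∑' x, f x ^ 2 - ∑' x, f x * conv μ f x := by
  unfold dirichletForm
  rw [(hasSum_dirichlet hμ hf).tsum_eq]; ring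

lemma dirichletForm_nonneg {μ : G → ℝ} (hμ : IsSymmProb μ) (f : G → ℝ) :
    0 ≤ dirichletForm μ f :=
  mul_nonneg (by norm_num) (tsum_nonneg fun q => mul_nonneg (sq_nonneg _) (hμ.1 _))

lemma dirichletForm_le_mul {μ ν f : G → ℝ} {c : ℝ} (hμ : IsSymmProb μ) (hν : IsSymmProb ν)
    (hf : Summable f) (h : ∀ g, ν g ≤ c * μ g) :
    dirichletForm ν f ≤ c * dirichletForm μ f := by
  unfold dirichletForm
  rw [mul_left_comm, ← tsum_mul_left (a := c)]
  refine mul_le_mul_of_nonneg_left ?_ (by norm_num)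
  refine Summable.tsum_le_tsum (fun q => ?_) (hasSum_dirichlet hν hf).summable
    ((hasSum_dirichlet hμ hf).summable.mul_left c)
  rw [mul_left_comm]
  exact mul_le_mul_of_nonneg_left (h _) (sq_nonneg _)

lemma isSymmProb_average {k : ℕ} {μi : Fin (k + 1) → G → ℝ} (hμi : ∀ i, IsSymmProb (μi i))
    {μ : G → ℝ} (hμ : ∀ g, μ g = (1 / (k + 1 : ℝ)) * ∑ i, μi i g) : IsSymmProb μ := by
  have hk : (0 : ℝ) < k + 1 := by positivity
  have hs : HasSum μ 1 := by
    have h1 : HasSum (fun g => ∑ i, μi i g) (∑ _i : Fin (k + 1), (1 : ℝ)) :=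
      hasSum_sum fun i _ => by
        have := (hμi i).2.1.hasSum
        rwa [(hμi i).2.2.1] at this
    have h2 := h1.mul_left (1 / (k + 1 : ℝ))
    rw [show μ = fun g => (1 / (k + 1 : ℝ)) * ∑ i, μi i g from funext hμ]
    rwa [show (1 / (k + 1 : ℝ)) * ∑ _i : Fin (k + 1), (1 : ℝ) = 1 by simp [hk.ne']] at h2
  refine ⟨fun g => ?_, hs.summable, hs.tsum_eq, fun g => ?_⟩
  · rw [hμ]
    exact mul_nonneg (by positivity) (Finset.sum_nonneg fun i _ => (hμi i).1 g)
  · rw [hμ, hμ]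
    rw [Finset.sum_congr rfl fun i _ => (hμi i).2.2.2 g]

lemma le_average {k : ℕ} {μi : Fin (k + 1) → G → ℝ} (hμi : ∀ i, IsSymmProb (μi i))
    {μ : G → ℝ} (hμ : ∀ g, μ g = (1 / (k + 1 : ℝ)) * ∑ i, μi i g) (i : Fin (k + 1)) (g : G) :
    μi i g ≤ (k + 1) * μ g := by
  have hk : (0 : ℝ) < k + 1 := by positivity
  rw [hμ, ← mul_assoc, mul_one_div_cancel hk.ne', one_mul]
  exact Finset.single_le_sum (f := fun i => μi i g) (fun j _ => (hμi j).1 g) (Finset.mem_univ i)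

/-! ### Displacements by products and the Nash inequality -/

lemma summable_translate {f : G → ℝ} (hf : Summable f) (g : G) : Summable fun x => f (x * g) :=
  (Equiv.mulRight g).summable_iff.mpr hf

lemma tsum_translate (f : G → ℝ) (g : G) : ∑' x, f (x * g) = ∑' x, f x :=
  (Equiv.mulRight g).tsum_eq f

lemma summable_displacement {f : G → ℝ} (hf : Summable f) (g : G) :
    Summable fun x => (f (x * g) - f x) ^ 2 :=
  summable_sq_of_summable ((summable_translate hf g).sub hf)

/-- Squared displacement of `f` under products: the triangle inequality is used in the lossy form
`(a + b)² ≤ 2a² + 2b²`, which costs a factor `4` per letter. -/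
lemma displacement_list {f : G → ℝ} (hf : Summable f) {U : Set G} {M : ℝ} (hM : 0 ≤ M)
    (hU : ∀ h ∈ U, ∑' x, (f (x * h) - f x) ^ 2 ≤ M) (l : List G) (hl : ∀ h ∈ l, h ∈ U) :
    ∑' x, (f (x * l.prod) - f x) ^ 2 ≤ 4 ^ l.length * M := by
  induction l with
  | nil => simpa using hM
  | cons h t ih =>
    have ih := ih fun y hy => hl y (List.mem_cons_of_mem _ hy)
    have hh := hU h (hl h List.mem_cons_self)
    set g := t.prod
    have s1 : Summable fun x => (f (x * h * g) - f (x * h)) ^ 2 :=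
      summable_translate (summable_displacement hf g) h
    have e1 : ∑' x, (f (x * h * g) - f (x * h)) ^ 2 = ∑' x, (f (x * g) - f x) ^ 2 :=
      tsum_translate (fun x => (f (x * g) - f x) ^ 2) h
    have s2 := summable_displacement hf h
    have key : ∑' x, (f (x * (h * g)) - f x) ^ 2 ≤
        ∑' x, (2 * (f (x * h * g) - f (x * h)) ^ 2 + 2 * (f (x * h) - f x) ^ 2) := by
      refine Summable.tsum_le_tsum (fun x => ?_) (summable_displacement hf _)
        ((s1.mul_left 2).add (s2.mul_left 2))
      rw [← mul_assoc]
      nlinarith [sq_nonneg (f (x * h * g) - f (x * h) - (f (x * h) - f x))]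
    rw [(s1.mul_left 2).tsum_add (s2.mul_left 2), tsum_mul_left, tsum_mul_left, e1] at key
    have h4 : (1 : ℝ) ≤ 4 ^ t.length := one_le_pow₀ (by norm_num)
    have : M ≤ 4 ^ t.length * M := le_mul_of_one_le_left hM h4
    rw [List.prod_cons, List.length_cons, pow_succ]
    nlinarith

/-- Summing `⟨f, f(· g)⟩` over a finite set of `g` gives at most `‖f‖₁²`, because distinct `g`
send a given `x` to distinct points. -/
lemma sum_correlation_le {f : G → ℝ} (hf : Summable f) (A : Finset G) :
    ∑ g ∈ A, ∑' x, f x * f (x * g) ≤ (∑' x, |f x|) ^ 2 := by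
  have hs : ∀ g, Summable fun x => f x * f (x * g) := fun g => by
    refine Summable.of_norm_bounded (hf.abs.mul_right (∑' y, |f y|)) fun x => ?_
    rw [norm_mul, Real.norm_eq_abs, Real.norm_eq_abs]
    exact mul_le_mul_of_nonneg_left (hf.abs.le_tsum _ fun _ _ => abs_nonneg _) (abs_nonneg _)
  rw [← Summable.tsum_finsetSum fun g _ => hs g, sq, ← tsum_mul_right]
  refine Summable.tsum_le_tsum (fun x => ?_) (summable_sum fun g _ => hs g) (hf.abs.mul_right _)
  rw [← Finset.mul_sum]
  refine (le_abs_self _).trans ?_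
  rw [abs_mul]
  refine mul_le_mul_of_nonneg_left ?_ (abs_nonneg _)
  refine (Finset.abs_sum_le_sum_abs _ _).trans ?_
  have h1 : Summable fun g => |f (x * g)| := (Equiv.mulLeft x).summable_iff.mpr hf.abs
  have h2 : ∑' g, |f (x * g)| = ∑' y, |f y| := (Equiv.mulLeft x).tsum_eq fun y => |f y|
  rw [← h2]
  exact h1.sum_le_tsum A fun _ _ => abs_nonneg _

/-- If every element of `A` displaces `f` by at most `M` in squared `ℓ²` norm, then
`‖f‖₂² ≤ M / 2 + ‖f‖₁² / #A`. -/
lemma nash_of_displacement {f : G → ℝ} (hf : Summable f) {A : Finset G} {M : ℝ}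
    (hA : ∀ g ∈ A, ∑' x, (f (x * g) - f x) ^ 2 ≤ M) {V : ℝ} (hV : 0 < V) (hVA : V ≤ A.card) :
    ∑' x, f x ^ 2 ≤ M / 2 + (∑' x, |f x|) ^ 2 / V := by
  have h2 := summable_sq_of_summable hf
  have hn : (0 : ℝ) < A.card := hV.trans_le hVA
  have hexp : ∀ g, ∑' x, (f (x * g) - f x) ^ 2 =
      2 * ∑' x, f x ^ 2 - 2 * ∑' x, f x * f (x * g) := fun g => by
    have s1 : Summable fun x => f (x * g) ^ 2 := summable_translate h2 g
    have e1 : ∑' x, f (x * g) ^ 2 = ∑' x, f x ^ 2 := tsum_translate (fun x => f x ^ 2) g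
    have s3 : Summable fun x => f x * f (x * g) := by
      have := ((s1.add h2).sub (summable_displacement hf g)).mul_left (1 / 2)
      refine this.congr fun x => ?_
      ring
    have : ∀ x, (f (x * g) - f x) ^ 2 = f (x * g) ^ 2 + f x ^ 2 - 2 * (f x * f (x * g)) :=
      fun x => by ring
    simp_rw [this]
    rw [(s1.add h2).tsum_sub (s3.mul_left 2), s1.tsum_add h2, tsum_mul_left, e1]
    ring
  have hsum : ∑ g ∈ A, (2 * ∑' x, f x ^ 2 - 2 * ∑' x, f x * f (x * g)) ≤ ∑ _g ∈ A, M :=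
    Finset.sum_le_sum fun g hg => (hexp g) ▸ hA g hg
  rw [Finset.sum_sub_distrib, ← Finset.mul_sum A (fun g => ∑' x, f x * f (x * g)) (2 : ℝ),
    Finset.sum_const, Finset.sum_const, nsmul_eq_mul,
    nsmul_eq_mul] at hsum
  have hc := sum_correlation_le hf A
  have h3 : (∑' x, |f x|) ^ 2 / (A.card : ℝ) ≤ (∑' x, |f x|) ^ 2 / V :=
    div_le_div_of_nonneg_left (sq_nonneg _) hV hVA
  have h4 : ∑' x, f x ^ 2 ≤ M / 2 + (∑' x, |f x|) ^ 2 / (A.card : ℝ) := by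
    rw [← sub_le_iff_le_add', le_div_iff₀ hn]
    nlinarith
  linarith

/-! ### Return probabilities -/

lemma convPow_nonneg {μ : G → ℝ} (hμ : IsSymmProb μ) (n : ℕ) (x : G) : 0 ≤ convPow μ n x := by
  induction n generalizing x with
  | zero => simp only [convPow]; split_ifs <;> norm_num
  | succ n ih => exact tsum_nonneg fun y => mul_nonneg (ih y) (hμ.1 _)

lemma convPow_succ (μ : G → ℝ) (n : ℕ) : convPow μ (n + 1) = conv μ (convPow μ n) := rfl

lemma hasSum_convPow {μ : G → ℝ} (hμ : IsSymmProb μ) (n : ℕ) : HasSum (convPow μ n) 1 := by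
  induction n with
  | zero => exact hasSum_ite_eq 1 1
  | succ n ih =>
    rw [convPow_succ, ← ih.tsum_eq]
    exact conv_hasSum hμ ih.summable

lemma tsum_convPow_mul {μ : G → ℝ} (hμ : IsSymmProb μ) (m n : ℕ) :
    ∑' x, convPow μ m x * convPow μ n x = convPow μ (m + n) 1 := by
  induction m generalizing n with
  | zero =>
    rw [tsum_eq_single 1 fun x hx => by simp [convPow, hx]]
    simp [convPow]
  | succ m ih =>
    rw [convPow_succ, ← conv_selfAdjoint hμ (hasSum_convPow hμ m).summable
      (hasSum_convPow hμ n).summable, ← convPow_succ, ih]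
    congr 1; omega

lemma conv_add {μ f g : G → ℝ} (hμ : IsSymmProb μ) (hf : Summable f) (hg : Summable g) :
    conv μ (fun x => f x + g x) = fun x => conv μ f x + conv μ g x := by
  have hs : ∀ {f : G → ℝ}, Summable f → ∀ x, Summable fun y => f y * μ (y⁻¹ * x) :=
    fun {f} hf x => Summable.of_norm_bounded hf.abs fun y => by
      rw [norm_mul, Real.norm_eq_abs, Real.norm_eq_abs, abs_of_nonneg (hμ.1 _)]
      exact mul_le_of_le_one_right (abs_nonneg _) (hμ.le_one _)
  funext x
  simp only [conv, add_mul]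
  exact (hs hf x).tsum_add (hs hg x)

lemma summable_convPow_mul {μ : G → ℝ} (hμ : IsSymmProb μ) (m n : ℕ) :
    Summable fun x => convPow μ m x * convPow μ n x := by
  refine Summable.of_norm_bounded (hasSum_convPow hμ m).summable.abs fun x => ?_
  rw [norm_mul, Real.norm_eq_abs, Real.norm_eq_abs, abs_of_nonneg (convPow_nonneg hμ n x)]
  refine mul_le_of_le_one_right (abs_nonneg _) ?_
  rw [← (hasSum_convPow hμ n).tsum_eq]
  exact (hasSum_convPow hμ n).summable.le_tsum x fun _ _ => convPow_nonneg hμ n _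

/-- Two consecutive return probabilities, `μ^{(2n)}(e) + μ^{(2n+1)}(e)`. -/
def pairReturn (μ : G → ℝ) (n : ℕ) : ℝ := convPow μ (2 * n) 1 + convPow μ (2 * n + 1) 1

lemma tsum_pair_mul {μ : G → ℝ} (hμ : IsSymmProb μ) (m n : ℕ) :
    ∑' x, (convPow μ m x + convPow μ (m + 1) x) * (convPow μ n x + convPow μ (n + 1) x) =
      convPow μ (m + n) 1 + 2 * convPow μ (m + n + 1) 1 + convPow μ (m + n + 2) 1 := by
  have : ∀ x, (convPow μ m x + convPow μ (m + 1) x) * (convPow μ n x + convPow μ (n + 1) x) =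
      convPow μ m x * convPow μ n x + convPow μ m x * convPow μ (n + 1) x +
      (convPow μ (m + 1) x * convPow μ n x + convPow μ (m + 1) x * convPow μ (n + 1) x) :=
    fun x => by ring
  simp_rw [this]
  have s := summable_convPow_mul hμ
  rw [((s m n).add (s m (n + 1))).tsum_add ((s (m + 1) n).add (s (m + 1) (n + 1))),
    (s m n).tsum_add (s m (n + 1)), (s (m + 1) n).tsum_add (s (m + 1) (n + 1))]
  simp_rw [tsum_convPow_mul hμ]
  rw [show m + (n + 1) = m + n + 1 by omega, show m + 1 + n = m + n + 1 by omega,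
    show m + 1 + (n + 1) = m + n + 2 by omega]
  ring

/-- The Dirichlet form of `μ^{(n)} + μ^{(n+1)}` telescopes exactly; using the sum of two
consecutive powers avoids any assumption on the spectrum of `μ` near `-1`. -/
lemma dirichletForm_pair {μ : G → ℝ} (hμ : IsSymmProb μ) (n : ℕ) :
    dirichletForm μ (fun x => convPow μ n x + convPow μ (n + 1) x) =
      pairReturn μ n - pairReturn μ (n + 1) := by
  have s := fun n => (hasSum_convPow hμ n).summable
  rw [dirichletForm_eq hμ ((s n).add (s (n + 1))), conv_add hμ (s n) (s (n + 1)),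
    ← convPow_succ, ← convPow_succ, tsum_pair_mul hμ n (n + 1)]
  simp_rw [sq]
  rw [tsum_pair_mul hμ n n]
  unfold pairReturn
  rw [show 2 * n = n + n by omega, show 2 * (n + 1) = n + n + 2 by omega,
    show n + (n + 1) = n + n + 1 by omega]
  ring_nf

lemma pairReturn_le {μ : G → ℝ} (hμ : IsSymmProb μ) (n : ℕ) :
    pairReturn μ n ≤ ∑' x, (convPow μ n x + convPow μ (n + 1) x) ^ 2 := by
  simp_rw [sq]
  rw [tsum_pair_mul hμ n n]
  unfold pairReturn
  have h1 := convPow_nonneg hμ (n + n + 1) 1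
  have h2 := convPow_nonneg hμ (n + n + 2) 1
  rw [show 2 * n = n + n by omega]
  linarith

lemma tsum_abs_pair {μ : G → ℝ} (hμ : IsSymmProb μ) (n : ℕ) :
    ∑' x, |convPow μ n x + convPow μ (n + 1) x| = 2 := by
  have : ∀ x, |convPow μ n x + convPow μ (n + 1) x| = convPow μ n x + convPow μ (n + 1) x :=
    fun x => abs_of_nonneg (add_nonneg (convPow_nonneg hμ _ _) (convPow_nonneg hμ _ _))
  simp_rw [this]
  rw [((hasSum_convPow hμ n).add (hasSum_convPow hμ (n + 1))).tsum_eq]; norm_num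

lemma pairReturn_le_two {μ : G → ℝ} (hμ : IsSymmProb μ) (n : ℕ) : pairReturn μ n ≤ 2 := by
  have h : ∀ m, convPow μ m 1 ≤ 1 := fun m => by
    rw [← (hasSum_convPow hμ m).tsum_eq]
    exact (hasSum_convPow hμ m).summable.le_tsum 1 fun _ _ => convPow_nonneg hμ m _
  unfold pairReturn
  linarith [h (2 * n), h (2 * n + 1)]

end Helpers

/-! ### From a Nash-type difference inequality to decay -/

/-- Regular variation and monotonicity give a tripling bound on all of `[1, ∞)`. -/
lemma exists_tripling {F : ℝ → ℝ} {γ : ℝ} (hmono : MonotoneOn F (Set.Ici 1))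
    (hpos : ∀ t : ℝ, 1 ≤ t → 0 < F t) (hreg : RegVaryAt F γ) :
    ∃ D : ℝ, 1 ≤ D ∧ ∀ t : ℝ, 1 ≤ t → F (3 * t) ≤ D * F t := by
  have h := (hreg 3 (by norm_num)).eventually (gt_mem_nhds (lt_add_one ((3 : ℝ) ^ γ)))
  obtain ⟨T, hT⟩ := Filter.eventually_atTop.mp h
  set T' := max T 1
  have h1 : (1 : ℝ) ≤ T' := le_max_right _ _
  have hF1 := hpos 1 le_rfl
  refine ⟨max (max ((3 : ℝ) ^ γ + 1) (F (3 * T') / F 1)) 1, le_max_right _ _, fun t ht => ?_⟩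
  have hFt := hpos t ht
  rw [← div_le_iff₀ hFt]
  refine le_trans ?_ (le_max_left _ _)
  rcases le_total T' t with h2 | h2
  · exact (hT t ((le_max_left _ _).trans h2)).le.trans (le_max_left _ _)
  · refine le_trans ?_ (le_max_right _ _)
    have a : F (3 * t) ≤ F (3 * T') :=
      hmono (Set.mem_Ici.mpr (by linarith)) (Set.mem_Ici.mpr (by linarith)) (by linarith)
    have b : F 1 ≤ F t := hmono Set.self_mem_Ici (Set.mem_Ici.mpr ht) ht
    exact div_le_div₀ (hpos _ (by linarith)).le a hF1 b

lemma geometric_decay {b : ℕ → ℝ} {θ ε : ℝ} (hθ : θ ≤ 1)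
    (h : ∀ n, θ * (b n - ε) ≤ b n - b (n + 1)) (m j : ℕ) :
    b (m + j) - ε ≤ (1 - θ) ^ j * (b m - ε) := by
  induction j with
  | zero => simp
  | succ j ih =>
    have := h (m + j)
    have h2 := mul_le_mul_of_nonneg_left ih (sub_nonneg.mpr hθ)
    rw [← add_assoc, pow_succ]
    nlinarith

/-- The difference inequality `b n ≤ L R (b n - b (n+1)) + 4 / F R` at every scale `R`, together
with the tripling bound for `F`, forces `b n ≲ 1 / F (δ n)`. The bound is propagated from `n / 2`
to `n` using the single scale `R = δ n`. -/
lemma decay_of_nash {F : ℝ → ℝ} {D L : ℝ} (hmono : MonotoneOn F (Set.Ici 1))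
    (hpos : ∀ t : ℝ, 1 ≤ t → 0 < F t) (hD1 : 1 ≤ D)
    (hD : ∀ t : ℝ, 1 ≤ t → F (3 * t) ≤ D * F t) (hL : 1 ≤ L)
    {b : ℕ → ℝ} (hb2 : ∀ n, b n ≤ 2)
    (hb : ∀ n, ∀ R : ℝ, 1 ≤ R → b n ≤ L * R * (b n - b (n + 1)) + 4 / F R) :
    ∃ c δ : ℝ, 0 < c ∧ 0 < δ ∧ ∀ n : ℕ, b n ≤ c / F (max (δ * n) 1) := by
  have hF1 := hpos 1 le_rfl
  -- `δ` is chosen so that `D * exp (-1 / (2 L δ)) ≤ 1 / 2`, since `x * exp (-x) ≤ 1`.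
  set δ : ℝ := 1 / (4 * L * D) with hδ
  have hδ0 : 0 < δ := by positivity
  have hδ4 : δ ≤ 1 / 4 := by
    rw [hδ]
    apply one_div_le_one_div_of_le (by norm_num)
    nlinarith [mul_le_mul hL hD1 zero_le_one (by linarith)]
  set c : ℝ := max 8 (2 * F 1)
  have hc8 : 8 ≤ c := le_max_left _ _
  have hcF : 2 * F 1 ≤ c := le_max_right _ _
  refine ⟨c, δ, by linarith, hδ0, fun n => ?_⟩
  induction n using Nat.strong_induction_on with
  | _ n ih =>
    rcases le_or_gt (δ * n) 1 with h1 | h1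
    · rw [max_eq_right h1, le_div_iff₀ hF1]
      nlinarith [hb2 n]
    · rw [max_eq_left h1.le]
      set R := δ * n with hR
      have hn0 : (0 : ℝ) < n := by
        by_contra hcon
        nlinarith
      have hn4 : (4 : ℝ) < n := by nlinarith
      have hn4' : 4 < n := by exact_mod_cast hn4
      have hR0 : 0 < R := by linarith
      have hFR := hpos R h1.le
      set m := n / 2 with hm
      have hmn : m < n := by omega
      have ihm := ih m hmn
      set t := max (δ * m) 1 with ht
      have ht1 : 1 ≤ t := le_max_right _ _
      have hFt := hpos t ht1
      have h3m : (n : ℝ) ≤ 3 * m := by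
        have : n ≤ 3 * m := by omega
        exact_mod_cast this
      have hRt : R ≤ 3 * t := by
        have : δ * m ≤ t := le_max_left _ _
        nlinarith
      have hFRt : F R ≤ D * F t :=
        (hmono (Set.mem_Ici.mpr h1.le) (Set.mem_Ici.mpr (by linarith)) hRt).trans (hD t ht1)
      have hbm : b m ≤ c * D / F R := by
        refine ihm.trans ?_
        rw [div_le_div_iff₀ hFt hFR]
        nlinarith
      have hLR : 1 ≤ L * R := by nlinarith
      have hLR0 : 0 < L * R := by linarith
      set θ := 1 / (L * R) with hθ
      have hθ1 : θ ≤ 1 := by rw [hθ, div_le_one hLR0]; exact hLR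
      set ε := 4 / F R with hε
      have hε0 : 0 < ε := by positivity
      have hdec := geometric_decay (b := b) (θ := θ) (ε := ε) hθ1 (fun i => by
        have := hb i R h1.le
        rw [hθ, one_div, inv_mul_le_iff₀ hLR0]
        linarith) m (n - m)
      rw [Nat.add_sub_cancel' hmn.le] at hdec
      set x := (1 - θ) ^ (n - m) with hx
      have hx0 : 0 ≤ x := pow_nonneg (by linarith) _
      have hxle : x * D ≤ 1 / 2 := by
        have e1 : x ≤ Real.exp (-(θ * (n - m : ℕ))) := by
          have := pow_le_pow_left₀ (by linarith) (Real.one_sub_le_exp_neg θ) (n - m)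
          rw [← Real.exp_nat_mul] at this
          refine this.trans (le_of_eq ?_)
          congr 1; ring
        have e2 : 2 * D ≤ θ * (n - m : ℕ) := by
          have hnm : (n : ℝ) / 2 ≤ (n - m : ℕ) := by
            have : n ≤ 2 * (n - m) := by omega
            have : (n : ℝ) ≤ 2 * (n - m : ℕ) := by exact_mod_cast this
            linarith
          have : θ * ((n : ℝ) / 2) = 2 * D := by
            rw [hθ, hR, hδ]; field_simp; norm_num
          rw [← this]
          exact mul_le_mul_of_nonneg_left hnm (by positivity)
        have e3 : x ≤ Real.exp (-(2 * D)) :=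
          e1.trans (Real.exp_le_exp.mpr (by linarith))
        have e4 : 2 * D * Real.exp (-(2 * D)) ≤ 1 := by
          rw [Real.exp_neg, ← div_eq_mul_inv, div_le_one (Real.exp_pos _)]
          linarith [Real.add_one_le_exp (2 * D)]
        nlinarith
      have hfin : b n ≤ 4 / F R + x * (c * D / F R) := by
        have : x * (b m - ε) ≤ x * (c * D / F R) :=
          mul_le_mul_of_nonneg_left (by linarith) hx0
        linarith
      refine hfin.trans ?_
      rw [show 4 / F R + x * (c * D / F R) = (4 + c * (x * D)) / F R by field_simp]
      refine div_le_div_of_nonneg_right ?_ hFR.le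
      nlinarith

/-! ### The spectral profile and the conclusion -/

/-- Cauchy–Schwarz on the support: `‖f‖₁² ≤ #support(f) ‖f‖₂²`. -/
lemma sq_tsum_abs_le {G : Type*} {f : G → ℝ} (hf : (Function.support f).Finite) :
    (∑' x, |f x|) ^ 2 ≤ (Function.support f).ncard * ∑' x, f x ^ 2 := by
  have h0 : ∀ x ∉ hf.toFinset, f x = 0 := fun x hx => by simpa using hx
  rw [tsum_eq_sum (s := hf.toFinset) fun x hx => by rw [h0 x hx, abs_zero],
    tsum_eq_sum (s := hf.toFinset) fun x hx => by rw [h0 x hx]; norm_num,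
    Set.ncard_eq_toFinset_card _ hf]
  refine sq_sum_le_card_mul_sum_sq.trans (le_of_eq ?_)
  simp_rw [sq_abs]

/-- The Nash inequality at all scales `R ≥ 1` bounds the spectral profile from below; `2 v` makes
the `ℓ¹` term absorb at most half of `‖f‖₂²`. -/
lemma spectralProfile_ge_of_nash {G : Type*} [Group G] {F : ℝ → ℝ} {L : ℝ} {μ : G → ℝ} (hL : 0 < L)
    (hFunb : ∀ M : ℝ, ∃ t : ℝ, 1 ≤ t ∧ M ≤ F t)
    (hnash : ∀ f : G → ℝ, Summable f → ∀ R : ℝ, 1 ≤ R →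
      ∑' x, f x ^ 2 ≤ L * R * dirichletForm μ f + (∑' x, |f x|) ^ 2 / F R)
    {v : ℝ} (hv : 1 ≤ v) : 1 / (2 * L) / Finv F (2 * v) ≤ spectralProfile μ v := by
  have hne : {t : ℝ | 1 ≤ t ∧ 2 * v ≤ F t}.Nonempty := hFunb (2 * v)
  have hFinv : 1 ≤ Finv F (2 * v) := le_csInf hne fun t ht => ht.1
  unfold spectralProfile
  refine le_csInf ?_ ?_
  · refine ⟨_, Pi.single (1 : G) (1 : ℝ), ?_, ?_, rfl⟩ <;>
      simp [Pi.support_single_of_ne, hv]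
  · rintro r ⟨f, hf1, hfv, rfl⟩
    have hfin : (Function.support f).Finite := Set.finite_of_ncard_pos hf1
    have hs : Summable f := summable_of_hasFiniteSupport hfin
    have hs2 := summable_sq_of_summable hs
    obtain ⟨x₀, hx₀⟩ := (Set.ncard_pos hfin).mp hf1
    have hpos : 0 < ∑' x, f x ^ 2 :=
      hs2.tsum_pos (fun x => sq_nonneg _) x₀ (sq_pos_of_ne_zero hx₀)
    have key : ∀ R : ℝ, 1 ≤ R → 2 * v ≤ F R →
        ∑' x, f x ^ 2 ≤ 2 * L * R * dirichletForm μ f := fun R hR hF => by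
      have h1 := hnash f hs R hR
      have h2 : (∑' x, |f x|) ^ 2 / F R ≤ (∑' x, f x ^ 2) / 2 := by
        rw [div_le_iff₀ (by linarith)]
        refine (sq_tsum_abs_le hfin).trans ?_
        nlinarith
      linarith
    have hE : 0 < dirichletForm μ f := by
      obtain ⟨R, hR, hF⟩ := hne
      have h := hpos.trans_le (key R hR hF)
      have : 0 < 2 * L * R := by positivity
      exact (pos_iff_pos_of_mul_pos h).mp this
    have hinf : (∑' x, f x ^ 2) / (2 * L * dirichletForm μ f) ≤ Finv F (2 * v) := by
      refine le_csInf hne fun R hR => ?_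
      rw [div_le_iff₀ (by positivity)]
      linarith [key R hR.1 hR.2]
    rw [div_le_iff₀ (by positivity)] at hinf
    rw [div_div, div_le_div_iff₀ (by positivity) hpos]
    linarith

/-- a pseudo-Poincaré inequality together with a volume lower bound gives
a lower bound on the spectral profile and an upper bound on the return probability. -/
theorem stmt1 {G : Type*} [Group G] [Countable G]
    (k : ℕ) (μi : Fin (k + 1) → G → ℝ) (hμi : ∀ i, IsSymmProb (μi i))
    (C : ℝ) (hC : 0 < C) (K : Fin (k + 1) → ℝ → Set G)
    (hK : ∀ R : ℝ, 0 < R → ∀ i, ∀ h ∈ K i R, ∀ f : G → ℝ,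
      Summable (fun x => (f x) ^ 2) →
      ∑' x, (f (x * h) - f x) ^ 2 ≤ C * R * dirichletForm (μi i) f)
    (Q : ℕ) (hQ : 1 ≤ Q) (γ : ℝ) (hγ : 0 < γ)
    (F : ℝ → ℝ) (hFmono : MonotoneOn F (Set.Ici 1))
    (hFpos : ∀ t : ℝ, 1 ≤ t → 0 < F t)
    (hFunb : ∀ M : ℝ, ∃ t : ℝ, 1 ≤ t ∧ M ≤ F t)
    (hFreg : RegVaryAt F γ)
    (hvol : ∀ R : ℝ, 1 ≤ R → ∃ A : Finset G,
      (A : Set G) ⊆ prodSet Q (⋃ i, K i R) ∧ F R ≤ (A.card : ℝ))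
    (μ : G → ℝ) (hμdef : ∀ g, μ g = (1 / (k + 1 : ℝ)) * ∑ i, μi i g) :
    ∃ c₁ c₂ c₃ c₄ : ℝ, 0 < c₁ ∧ 0 < c₂ ∧ 0 < c₃ ∧ 0 < c₄ ∧
      (∀ v : ℝ, 1 ≤ v → c₁ / Finv F (c₂ * v) ≤ spectralProfile μ v) ∧
      (∀ n : ℕ, 1 ≤ n → convPow μ (2 * n) 1 ≤ c₃ / F (max (c₄ * n) 1)) := by
  have hμ : IsSymmProb μ := isSymmProb_average hμi hμdef
  set L : ℝ := max (4 ^ Q * C * (k + 1) / 2) 1 with hLdef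
  have hL1 : 1 ≤ L := le_max_right _ _
  have hnash : ∀ f : G → ℝ, Summable f → ∀ R : ℝ, 1 ≤ R →
      ∑' x, f x ^ 2 ≤ L * R * dirichletForm μ f + (∑' x, |f x|) ^ 2 / F R := by
    intro f hf R hR
    have hR0 : 0 < R := by linarith
    have hE := dirichletForm_nonneg hμ f
    obtain ⟨A, hA, hcard⟩ := hvol R hR
    set M := C * R * ((k + 1) * dirichletForm μ f) with hM
    have hM0 : 0 ≤ M := by positivity
    have hU : ∀ h ∈ ⋃ i, K i R, ∑' x, (f (x * h) - f x) ^ 2 ≤ M := by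
      intro h hh
      obtain ⟨i, hi⟩ := Set.mem_iUnion.mp hh
      exact (hK R hR0 i h hi f (summable_sq_of_summable hf)).trans
        (mul_le_mul_of_nonneg_left
          (dirichletForm_le_mul hμ (hμi i) hf (le_average hμi hμdef i)) (by positivity))
    have hdisp : ∀ g ∈ A, ∑' x, (f (x * g) - f x) ^ 2 ≤ 4 ^ Q * M := by
      intro g hg
      obtain ⟨l, rfl, hl, rfl⟩ := hA hg
      exact displacement_list hf hM0 hU l hl
    refine (nash_of_displacement hf hdisp (hFpos R hR) hcard).trans ?_
    have h1 : 4 ^ Q * C * (k + 1) / 2 * (R * dirichletForm μ f) ≤ L * (R * dirichletForm μ f) :=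
      mul_le_mul_of_nonneg_right (le_max_left _ _) (by positivity)
    have h2 : 4 ^ Q * M / 2 = 4 ^ Q * C * (k + 1) / 2 * (R * dirichletForm μ f) := by
      rw [hM]; ring
    linarith
  obtain ⟨D, hD1, hD⟩ := exists_tripling hFmono hFpos hFreg
  obtain ⟨c, δ, hc, hδ, hdecay⟩ := decay_of_nash hFmono hFpos hD1 hD hL1
    (pairReturn_le_two hμ) (fun n R hR => by
      have h := hnash _ ((hasSum_convPow hμ n).summable.add (hasSum_convPow hμ (n + 1)).summable)
        R hR
      rw [tsum_abs_pair hμ n, dirichletForm_pair hμ n] at h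
      refine ((pairReturn_le hμ n).trans h).trans (le_of_eq ?_)
      norm_num)
  refine ⟨1 / (2 * L), 2, c, δ, by positivity, by norm_num, hc, hδ, fun v hv => ?_, fun n _ => ?_⟩
  · exact spectralProfile_ge_of_nash (by linarith) hFunb hnash hv
  · refine le_trans ?_ (hdecay n)
    exact le_add_of_nonneg_right (convPow_nonneg hμ _ _)
end
end

section
/- Let G be a countable group, H a subgroup of G, and ‖·‖ a quasi-norm on H (i.e. ‖hh'‖ ≤ A(‖h‖ + ‖h'‖) for some constant A ≥ 1, ‖h⁻¹‖ = ‖h‖, and ‖e‖ = 0). Assume there are a real d > 0 and constants 0 < c₁ ≤ c₂ with c₁ r^d ≤ #{h ∈ H : ‖h‖ ≤ r} ≤ c₂ r^d for all r ≥ 1. Let φ : [0,∞) → (0,∞) be increasing and regularly varying at infinity of some positive index, and let μ be a symmetric probability measure on G vanishing off H such that c₃ ≤ μ(h)·φ(1+‖h‖)·(1+‖h‖)^d ≤ c₄ for all h ∈ H, for constants 0 < c₃ ≤ c₄. Then there exists a constant C such that for all f ∈ ℓ²(G), all R ≥ 1 and all h ∈ H with ‖h‖ ≤ R: ∑_{x∈G}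 |f(xh) − f(x)|² ≤ C φ(R) E_μ(f,f). -/
/-!
Write `D(g) = ∑ₓ (f(xg) - f(x))²`. Shifting the summation variable by `h` gives
`D(h) ≤ 2 D(g) + 2 D(h⁻¹g)` for all `g` (`sqDiff_le`). Averaging this over `g` in the ball `B(R)` of `H`,
with `‖h‖ ≤ R`, and using that both `g` and `h⁻¹g` lie in `B(2AR)`, one gets
`#B(R) · D(h) ≤ 4 ∑_{g ∈ B(2AR)} D(g)`. On `B(2AR)` the density of `μ` is at least a constant times
`1 / (φ((1+2A)R) R^d)`, so the right side is at most a constant times `φ((1+2A)R) R^d E_μ(f,f)`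
(`sum_mul_sqDiff_le`). The factor `R^d` cancels against `#B(R) ≥ c₁ R^d`, and `φ((1+2A)R)` is at most
a constant times `φ(R)` by monotonicity and regular variation (`exists_doubling`).
-/


open scoped BigOperators Classical

noncomputable section

/-- The squared `ℓ²` distance `∑ₓ (f(xg) - f(x))²` between `f` and its right translate by `g`. -/
def sqDiff {G : Type*} [Group G] (f : G → ℝ) (g : G) : ℝ := ∑' x, (f (x * g) - f x) ^ 2

lemma summable_sqDiff {G : Type*} [Group G] {f : G → ℝ} (hf : Summable fun x => f x ^ 2) (g : G) :
    Summable fun x => (f (x * g) - f x) ^ 2 := by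
  have h1 : Summable fun x => f (x * g) ^ 2 := (Equiv.mulRight g).summable_iff.mpr hf
  refine Summable.of_nonneg_of_le (fun _ => sq_nonneg _) (fun x => ?_)
    ((h1.mul_left 2).add (hf.mul_left 2))
  nlinarith [sq_nonneg (f (x * g) + f x)]

lemma sqDiff_nonneg {G : Type*} [Group G] (f : G → ℝ) (g : G) : 0 ≤ sqDiff f g :=
  tsum_nonneg fun _ => sq_nonneg _

lemma sqDiff_le {G : Type*} [Group G] {f : G → ℝ} (hf : Summable fun x => f x ^ 2) (h g : G) :
    sqDiff f h ≤ 2 * sqDiff f g + 2 * sqDiff f (h⁻¹ * g) := by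
  have e : (fun x => (f (x * g) - f (x * h)) ^ 2)
      = (fun x => (f (x * (h⁻¹ * g)) - f x) ^ 2) ∘ Equiv.mulRight h := by
    funext x
    simp [mul_assoc]
  have hs : Summable fun x => (f (x * g) - f (x * h)) ^ 2 := by
    rw [e]
    exact (Equiv.mulRight h).summable_iff.mpr (summable_sqDiff hf _)
  have ht : ∑' x, (f (x * g) - f (x * h)) ^ 2 = sqDiff f (h⁻¹ * g) := by
    rw [e]
    exact (Equiv.mulRight h).tsum_eq (fun x => (f (x * (h⁻¹ * g)) - f x) ^ 2)
  rw [← ht]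
  unfold sqDiff
  rw [← tsum_mul_left, ← tsum_mul_left,
    ← ((summable_sqDiff hf g).mul_left 2).tsum_add (hs.mul_left 2)]
  refine (summable_sqDiff hf h).tsum_le_tsum (fun x => ?_)
    (((summable_sqDiff hf g).mul_left 2).add (hs.mul_left 2))
  nlinarith [sq_nonneg ((f (x * g) - f x) + (f (x * g) - f (x * h)))]

/-- The double series defining the Dirichlet form converges for `f ∈ ℓ²` and summable `μ ≥ 0`, so
that the real-valued `tsum` in `dirichletForm` is a genuine sum. -/
lemma summable_dirichlet {G : Type*} [Group G] {f μ : G → ℝ} (hf : Summable fun x => f x ^ 2)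
    (hμ0 : ∀ g, 0 ≤ μ g) (hμs : Summable μ) :
    Summable fun q : G × G => (f (q.1 * q.2) - f q.1) ^ 2 * μ q.2 := by
  have h1 : Summable fun q : G × G => f q.1 ^ 2 * μ q.2 :=
    hf.mul_of_nonneg hμs (fun _ => sq_nonneg _) hμ0
  let e : G × G ≃ G × G :=
    { toFun := fun q => (q.1 * q.2, q.2)
      invFun := fun q => (q.1 * q.2⁻¹, q.2)
      left_inv := fun q => by simp
      right_inv := fun q => by simp }
  have h2 : Summable fun q : G × G => f (q.1 * q.2) ^ 2 * μ q.2 := e.summable_iff.mpr h1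
  refine Summable.of_nonneg_of_le (fun q => mul_nonneg (sq_nonneg _) (hμ0 _)) (fun q => ?_)
    ((h2.mul_left 2).add (h1.mul_left 2))
  have := mul_nonneg (sq_nonneg (f (q.1 * q.2) + f q.1)) (hμ0 q.2)
  nlinarith

lemma sum_mul_sqDiff_le {G : Type*} [Group G] {f μ : G → ℝ} (hf : Summable fun x => f x ^ 2)
    (hμ0 : ∀ g, 0 ≤ μ g) (hμs : Summable μ) (S : Finset G) :
    ∑ g ∈ S, μ g * sqDiff f g ≤ 2 * dirichletForm μ f := by
  have hs : Summable fun p : G × G => (f (p.2 * p.1) - f p.2) ^ 2 * μ p.1 :=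
    (Equiv.prodComm G G).summable_iff.mpr (summable_dirichlet hf hμ0 hμs)
  have h1 : ∑' q : G × G, (f (q.1 * q.2) - f q.1) ^ 2 * μ q.2
      = ∑' p : G × G, (f (p.2 * p.1) - f p.2) ^ 2 * μ p.1 :=
    ((Equiv.prodComm G G).tsum_eq
      (fun q : G × G => (f (q.1 * q.2) - f q.1) ^ 2 * μ q.2)).symm
  have h2 : ∀ g, ∑' x, (f (x * g) - f x) ^ 2 * μ g = μ g * sqDiff f g := fun g => by
    rw [tsum_mul_right, mul_comm]; rfl
  have h3 := hs.prod
  have h4 := hs.tsum_prod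
  simp only [h2] at h3 h4
  have : 2 * dirichletForm μ f = ∑' g, μ g * sqDiff f g := by
    rw [dirichletForm, h1, h4]; ring
  rw [this]
  exact h3.sum_le_tsum S fun g _ => mul_nonneg (hμ0 g) (sqDiff_nonneg f g)

lemma exists_doubling {φ : ℝ → ℝ} (hφpos : ∀ t : ℝ, 0 ≤ t → 0 < φ t)
    (hφmono : MonotoneOn φ (Set.Ici 0)) {γ : ℝ} (hφreg : RegVaryAt φ γ) {l : ℝ} (hl : 0 < l) :
    ∃ K : ℝ, 0 < K ∧ ∀ R : ℝ, 1 ≤ R → φ (l * R) ≤ K * φ R := by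
  obtain ⟨M, hM⟩ := Filter.eventually_atTop.mp
    ((hφreg l hl).eventually (gt_mem_nhds (lt_add_one (l ^ γ))))
  set T := max M 1
  have hT1 : 1 ≤ T := le_max_right _ _
  have hφ1 := hφpos 1 zero_le_one
  have hK1 : 0 < l ^ γ + 1 := by positivity
  have hφM := hφpos (l * T) (by positivity)
  -- Beyond `T` regular variation gives the bound; on `[1, T]` compare with the endpoint values.
  refine ⟨max (l ^ γ + 1) (φ (l * T) / φ 1), lt_max_of_lt_left hK1, fun R hR => ?_⟩
  have hφR := hφpos R (by linarith)
  rcases le_total T R with h | h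
  · have := (div_lt_iff₀ hφR).mp (hM R ((le_max_left _ _).trans h))
    exact this.le.trans (mul_le_mul_of_nonneg_right (le_max_left _ _) hφR.le)
  · have h1 : φ (l * R) ≤ φ (l * T) :=
      hφmono (Set.mem_Ici.mpr (by positivity)) (Set.mem_Ici.mpr (by positivity)) (by gcongr)
    have h2 : φ 1 ≤ φ R :=
      hφmono (Set.mem_Ici.mpr zero_le_one) (Set.mem_Ici.mpr (by linarith)) hR
    calc φ (l * R) ≤ φ (l * T) / φ 1 * φ 1 := by rwa [div_mul_cancel₀ _ hφ1.ne']
      _ ≤ φ (l * T) / φ 1 * φ R := by gcongr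
      _ ≤ _ := mul_le_mul_of_nonneg_right (le_max_right _ _) hφR.le

/-- pseudo-Poincaré inequality for a measure supported on a subgroup with
quasi-norm volume growth of degree `d` and density `≍ 1/(φ(1+‖h‖)(1+‖h‖)^d)`. -/
theorem stmt2 {G : Type*} [Group G] [Countable G]
    (H : Subgroup G) (N : G → ℝ) (A : ℝ) (hA : 1 ≤ A)
    (hN0 : ∀ h ∈ H, 0 ≤ N h) (hN1 : N 1 = 0) (hNinv : ∀ h ∈ H, N h⁻¹ = N h)
    (hNsub : ∀ h ∈ H, ∀ h' ∈ H, N (h * h') ≤ A * (N h + N h'))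
    (d : ℝ) (hd : 0 < d) (c₁ c₂ : ℝ) (hc₁ : 0 < c₁) (hc₁₂ : c₁ ≤ c₂)
    (hcount : ∀ r : ℝ, 1 ≤ r →
      c₁ * r ^ d ≤ (({h : G | h ∈ H ∧ N h ≤ r}).ncard : ℝ) ∧
      (({h : G | h ∈ H ∧ N h ≤ r}).ncard : ℝ) ≤ c₂ * r ^ d)
    (φ : ℝ → ℝ) (hφpos : ∀ t : ℝ, 0 ≤ t → 0 < φ t)
    (hφmono : MonotoneOn φ (Set.Ici 0))
    (γ : ℝ) (hγ : 0 < γ) (hφreg : RegVaryAt φ γ)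
    (μ : G → ℝ) (hμ : IsSymmProb μ) (hμsupp : ∀ g, g ∉ H → μ g = 0)
    (c₃ c₄ : ℝ) (hc₃ : 0 < c₃) (hc₃₄ : c₃ ≤ c₄)
    (hμcomp : ∀ h ∈ H, c₃ ≤ μ h * φ (1 + N h) * (1 + N h) ^ d ∧
      μ h * φ (1 + N h) * (1 + N h) ^ d ≤ c₄) :
    ∃ C : ℝ, ∀ f : G → ℝ, Summable (fun x => (f x) ^ 2) →
      ∀ R : ℝ, 1 ≤ R → ∀ h ∈ H, N h ≤ R →
        ∑' x, (f (x * h) - f x) ^ 2 ≤ C * φ R * dirichletForm μ f := by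
  obtain ⟨hμ0, hμs, -, -⟩ := hμ
  have hl : 0 < 1 + 2 * A := by linarith
  obtain ⟨K, hK, hKφ⟩ := exists_doubling hφpos hφmono hφreg hl
  refine ⟨8 * K * (1 + 2 * A) ^ d / (c₁ * c₃), fun f hf R hR h hh hhR => ?_⟩
  change sqDiff f h ≤ _
  have hR0 : 0 < R := by linarith
  -- An infinite set has `ncard` zero, so the lower volume bound forces balls to be finite.
  have hfin : ∀ r : ℝ, 1 ≤ r → {g : G | g ∈ H ∧ N g ≤ r}.Finite := fun r hr =>
    Set.finite_of_ncard_ne_zero fun h0 => by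
      have h1 := (hcount r hr).1
      rw [h0, Nat.cast_zero] at h1
      have : 0 < c₁ * r ^ d := mul_pos hc₁ (Real.rpow_pos_of_pos (by linarith) d)
      linarith
  have hAR : R ≤ 2 * A * R := by nlinarith
  set B := (hfin R hR).toFinset with hB
  set B' := (hfin (2 * A * R) (by linarith)).toFinset with hB'
  have mB : ∀ g, g ∈ B ↔ g ∈ H ∧ N g ≤ R := fun g => by simp [hB]
  have mB' : ∀ g, g ∈ B' ↔ g ∈ H ∧ N g ≤ 2 * A * R := fun g => by simp [hB']
  have hcard : c₁ * R ^ d ≤ (B.card : ℝ) := by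
    have := (hcount R hR).1
    rwa [Set.ncard_eq_toFinset_card _ (hfin R hR)] at this
  have s1 : ∑ g ∈ B, sqDiff f g ≤ ∑ g ∈ B', sqDiff f g := by
    refine Finset.sum_le_sum_of_subset_of_nonneg (fun g hg => ?_) fun g _ _ => sqDiff_nonneg f g
    rw [mB] at hg
    exact (mB' g).mpr ⟨hg.1, hg.2.trans hAR⟩
  have s2 : ∑ g ∈ B, sqDiff f (h⁻¹ * g) ≤ ∑ g ∈ B', sqDiff f g := by
    rw [← Finset.sum_image (s := B) (g := fun g => h⁻¹ * g) (f := sqDiff f)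
      (fun a _ b _ hab => mul_left_cancel hab)]
    refine Finset.sum_le_sum_of_subset_of_nonneg (fun g hg => ?_) fun g _ _ => sqDiff_nonneg f g
    obtain ⟨a, ha, rfl⟩ := Finset.mem_image.mp hg
    rw [mB] at ha
    refine (mB' _).mpr ⟨H.mul_mem (H.inv_mem hh) ha.1, ?_⟩
    have h1 := hNsub h⁻¹ (H.inv_mem hh) a ha.1
    rw [hNinv h hh] at h1
    nlinarith [ha.2]
  have s3 : (B.card : ℝ) * sqDiff f h ≤ 4 * ∑ g ∈ B', sqDiff f g := by
    calc (B.card : ℝ) * sqDiff f h = ∑ g ∈ B, sqDiff f h := by simp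
      _ ≤ ∑ g ∈ B, (2 * sqDiff f g + 2 * sqDiff f (h⁻¹ * g)) :=
          Finset.sum_le_sum fun g _ => sqDiff_le hf h g
      _ = 2 * ∑ g ∈ B, sqDiff f g + 2 * ∑ g ∈ B, sqDiff f (h⁻¹ * g) := by
          rw [Finset.sum_add_distrib, Finset.mul_sum, Finset.mul_sum]
      _ ≤ _ := by linarith
  have hφR := hφpos R hR0.le
  have hRd : 0 < R ^ d := Real.rpow_pos_of_pos hR0 d
  have hld : 0 < (1 + 2 * A) ^ d := Real.rpow_pos_of_pos hl d
  set W := K * φ R * ((1 + 2 * A) ^ d * R ^ d) with hW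
  have hW0 : 0 < W := by positivity
  have hdens : ∀ g ∈ B', c₃ ≤ μ g * W := fun g hg => by
    rw [mB'] at hg
    have hg0 := hN0 g hg.1
    have hle : 1 + N g ≤ (1 + 2 * A) * R := by nlinarith [hg.2]
    have h1 : φ (1 + N g) ≤ K * φ R :=
      (hφmono (Set.mem_Ici.mpr (by linarith)) (Set.mem_Ici.mpr (by positivity)) hle).trans
        (hKφ R hR)
    have h2 : (1 + N g) ^ d ≤ (1 + 2 * A) ^ d * R ^ d := by
      rw [← Real.mul_rpow hl.le hR0.le]
      exact Real.rpow_le_rpow (by linarith) hle hd.le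
    calc c₃ ≤ μ g * φ (1 + N g) * (1 + N g) ^ d := (hμcomp g hg.1).1
      _ = μ g * (φ (1 + N g) * (1 + N g) ^ d) := mul_assoc _ _ _
      _ ≤ μ g * W := by
        refine mul_le_mul_of_nonneg_left ?_ (hμ0 g)
        exact mul_le_mul h1 h2 (Real.rpow_nonneg (by linarith) d) (by positivity)
  have s4 : c₃ * ∑ g ∈ B', sqDiff f g ≤ W * (2 * dirichletForm μ f) := by
    calc c₃ * ∑ g ∈ B', sqDiff f g = ∑ g ∈ B', c₃ * sqDiff f g := Finset.mul_sum _ _ _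
      _ ≤ ∑ g ∈ B', W * (μ g * sqDiff f g) := Finset.sum_le_sum fun g hg => by
          have := mul_le_mul_of_nonneg_right (hdens g hg) (sqDiff_nonneg f g)
          linarith
      _ = W * ∑ g ∈ B', μ g * sqDiff f g := (Finset.mul_sum _ _ _).symm
      _ ≤ _ := mul_le_mul_of_nonneg_left (sum_mul_sqDiff_le hf hμ0 hμs B') hW0.le
  have s5 : c₁ * R ^ d * sqDiff f h ≤ 4 * ∑ g ∈ B', sqDiff f g :=
    (mul_le_mul_of_nonneg_right hcard (sqDiff_nonneg f h)).trans s3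
  have s6 : c₁ * c₃ * R ^ d * sqDiff f h ≤ 8 * W * dirichletForm μ f := by
    have := mul_le_mul_of_nonneg_left s5 hc₃.le
    linarith
  have hE : 8 * K * (1 + 2 * A) ^ d / (c₁ * c₃) * φ R * dirichletForm μ f
      = 8 * W * dirichletForm μ f / (c₁ * c₃ * R ^ d) := by
    rw [hW]
    field_simp
  rw [hE, le_div_iff₀ (by positivity)]
  linarith
end
end

section
/- Let G be a countable group, H a subgroup of G, and ‖·‖ a quasi-norm on H (i.e. ‖hh'‖ ≤ A(‖h‖ + ‖h'‖) for some constant A ≥ 1, ‖h⁻¹‖ = ‖h‖, and ‖e‖ = 0). Assume there are a real d > 0 and constants 0 < c₁ ≤ c₂ with c₁ r^d ≤ #{h ∈ H : ‖h‖ ≤ r} ≤ c₂ r^d for all r ≥ 1. Let φ : [0,∞) → (0,∞) be increasing and regularly varying at infinity of some positive index, and let μ be a symmetric probability measure on G vanishing off H such that c₃ ≤ μ(h)·φ(1+‖h‖)·(1+‖h‖)^d ≤ c₄ for all h ∈ H, for constants 0 < c₃ ≤ c₄. Then there exist constants a₁, a₂, a₃, a₄ > 0 such that a₁/φ(a₂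 r) ≤ ∑_{h∈H : ‖h‖ ≥ r} μ(h) ≤ a₃/φ(a₄ r) for all r ≥ 1. -/
/-!
The lower bound comes from a single annulus `r < ‖h‖ ≤ K r`: for `K` large the volume bounds give it at
least `r ^ d` elements, each of mass at least a constant times `1 / (φ ((1 + K) r) r ^ d)`.

For the upper bound, the dyadic annulus `r ≤ ‖h‖ < 2 r` has mass at most `C / φ r`
(`sum_annulus_le`). Regular variation of positive index gives `q > 1` and `T` with
`q * φ t ≤ φ (2 * t)` for `t ≥ T` (`exists_growth`), so for `r ≥ T` the masses of the successive
dyadic annuli are dominated by a geometric series (`sum_tail_le`). For `r < T` the tail is at most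
`1 ≤ φ T / φ r`.
-/

open scoped BigOperators Classical

noncomputable section

/-- A function that is regularly varying of positive index eventually grows by a fixed factor
`q > 1` under doubling of the argument. -/
lemma exists_growth {φ : ℝ → ℝ} (hφpos : ∀ t : ℝ, 0 ≤ t → 0 < φ t) {γ : ℝ} (hγ : 0 < γ)
    (hφreg : RegVaryAt φ γ) :
    ∃ q T : ℝ, 1 < q ∧ 1 ≤ T ∧ ∀ t, T ≤ t → q * φ t ≤ φ (2 * t) := by
  have h2 : (1 : ℝ) < 2 ^ γ := Real.one_lt_rpow (by norm_num) hγ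
  obtain ⟨q, hq1, hq2⟩ := exists_between h2
  have hev := (hφreg 2 (by norm_num)).eventually (lt_mem_nhds hq2)
  obtain ⟨T, hT⟩ := Filter.eventually_atTop.1 hev
  refine ⟨q, max T 1, hq1, le_max_right _ _, fun t ht => ?_⟩
  have ht0 : 0 ≤ t := by linarith [le_max_right T 1]
  have h := hT t ((le_max_left _ _).trans ht)
  exact ((lt_div_iff₀ (hφpos t ht0)).1 h).le

/-- The mass of a dyadic annulus: it has `O(r ^ d)` elements, each of mass
`O(1 / (φ r * r ^ d))`. -/
lemma sum_annulus_le {G : Type*} {P : G → Prop} {N : G → ℝ} {d c₂ : ℝ} (hd : 0 < d)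
    (hfin : ∀ r : ℝ, 1 ≤ r → {h : G | P h ∧ N h ≤ r}.Finite)
    (hcount : ∀ r : ℝ, 1 ≤ r → (({h : G | P h ∧ N h ≤ r}).ncard : ℝ) ≤ c₂ * r ^ d)
    {φ : ℝ → ℝ} (hφpos : ∀ t : ℝ, 0 ≤ t → 0 < φ t) (hφmono : MonotoneOn φ (Set.Ici 0))
    {μ : G → ℝ} (hμ0 : ∀ g, 0 ≤ μ g) {c₄ : ℝ} (hc₄ : 0 ≤ c₄)
    (hμcomp : ∀ h, P h → μ h * φ (1 + N h) * (1 + N h) ^ d ≤ c₄)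
    {r : ℝ} (hr : 1 ≤ r) (s : Finset G) (hs : ∀ x ∈ s, P x ∧ r ≤ N x ∧ N x < 2 * r) :
    ∑ x ∈ s, μ x ≤ c₄ * c₂ * 2 ^ d / φ r := by
  have hr0 : 0 < r := by linarith
  have hφr := hφpos r hr0.le
  have hrd : 0 < r ^ d := Real.rpow_pos_of_pos hr0 d
  have hpt : ∀ x ∈ s, μ x ≤ c₄ / (φ r * r ^ d) := by
    intro x hx
    obtain ⟨hP, h1, -⟩ := hs x hx
    rw [le_div_iff₀ (by positivity)]
    refine le_trans ?_ (hμcomp x hP)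
    rw [mul_assoc]
    refine mul_le_mul_of_nonneg_left ?_ (hμ0 x)
    refine mul_le_mul (hφmono hr0.le (by simp; linarith) (by linarith))
      (Real.rpow_le_rpow hr0.le (by linarith) hd.le) hrd.le (hφpos _ (by linarith)).le
  have hcard : (s.card : ℝ) ≤ c₂ * (2 * r) ^ d := by
    refine le_trans ?_ (hcount (2 * r) (by linarith))
    have hsub : (s : Set G) ⊆ {h : G | P h ∧ N h ≤ 2 * r} := fun x hx =>
      ⟨(hs x hx).1, (hs x hx).2.2.le⟩
    have hle := Set.ncard_le_ncard hsub (hfin (2 * r) (by linarith))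
    rw [Set.ncard_coe_finset] at hle
    exact Nat.cast_le.2 hle
  calc ∑ x ∈ s, μ x ≤ s.card • (c₄ / (φ r * r ^ d)) := Finset.sum_le_card_nsmul _ _ _ hpt
    _ = s.card * (c₄ / (φ r * r ^ d)) := nsmul_eq_mul _ _
    _ ≤ c₂ * (2 * r) ^ d * (c₄ / (φ r * r ^ d)) :=
        mul_le_mul_of_nonneg_right hcard (by positivity)
    _ = c₄ * c₂ * 2 ^ d / φ r := by
        rw [Real.mul_rpow (by norm_num) hr0.le]
        field_simp

/-- Summing the annular bounds `C / φ (2 ^ k * r)` as a geometric series of ratio `1 / q`. The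
induction peels off the innermost annulus; `C * q / (q - 1)` is the constant `C'` solving
`C + C' / q = C'`. -/
lemma sum_tail_le {G : Type*} {P : G → Prop} {N μ : G → ℝ} {φ : ℝ → ℝ}
    (hφpos : ∀ t : ℝ, 0 ≤ t → 0 < φ t) {C q T : ℝ} (hC : 0 ≤ C) (hq : 1 < q) (hT : 1 ≤ T)
    (hgrow : ∀ t, T ≤ t → q * φ t ≤ φ (2 * t))
    (hann : ∀ r : ℝ, 1 ≤ r → ∀ s : Finset G, (∀ x ∈ s, P x ∧ r ≤ N x ∧ N x < 2 * r) →
      ∑ x ∈ s, μ x ≤ C / φ r) (n : ℕ) :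
    ∀ r : ℝ, T ≤ r → ∀ s : Finset G, (∀ x ∈ s, P x ∧ r ≤ N x ∧ N x < 2 ^ n * r) →
      ∑ x ∈ s, μ x ≤ C * q / (q - 1) / φ r := by
  have hq1 : 0 < q - 1 := by linarith
  have hC' : 0 ≤ C * q / (q - 1) := by positivity
  induction n with
  | zero =>
    intro r hr s hs
    have : s = ∅ := Finset.eq_empty_of_forall_notMem fun x hx => by
      have := hs x hx
      simp only [pow_zero, one_mul] at this
      linarith
    have := hφpos r (by linarith)
    subst s
    simp only [Finset.sum_empty]
    positivity
  | succ n ih =>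
    intro r hr s hs
    have hφr := hφpos r (by linarith)
    rw [← Finset.sum_filter_add_sum_filter_not s (fun x => N x < 2 * r)]
    have h1 := hann r (by linarith) (s.filter (fun x => N x < 2 * r)) (fun x hx => by
      rw [Finset.mem_filter] at hx
      exact ⟨(hs x hx.1).1, (hs x hx.1).2.1, hx.2⟩)
    have h2 := ih (2 * r) (by linarith) (s.filter (fun x => ¬ N x < 2 * r)) (fun x hx => by
      rw [Finset.mem_filter] at hx
      refine ⟨(hs x hx.1).1, not_lt.1 hx.2, ?_⟩
      have := (hs x hx.1).2.2
      rw [pow_succ] at this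
      linarith)
    have h3 : C * q / (q - 1) / φ (2 * r) ≤ C * q / (q - 1) / (q * φ r) :=
      div_le_div_of_nonneg_left hC' (by positivity) (hgrow r hr)
    have h4 : C / φ r + C * q / (q - 1) / (q * φ r) = C * q / (q - 1) / φ r := by
      field_simp
      ring
    linarith

/-- two-sided tail estimate `∑_{‖h‖ ≥ r} μ(h) ≍ 1/φ(r)`. -/
theorem stmt3 {G : Type*} [Group G] [Countable G]
    (H : Subgroup G) (N : G → ℝ) (A : ℝ) (hA : 1 ≤ A)
    (hN0 : ∀ h ∈ H, 0 ≤ N h) (hN1 : N 1 = 0) (hNinv : ∀ h ∈ H, N h⁻¹ = N h)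
    (hNsub : ∀ h ∈ H, ∀ h' ∈ H, N (h * h') ≤ A * (N h + N h'))
    (d : ℝ) (hd : 0 < d) (c₁ c₂ : ℝ) (hc₁ : 0 < c₁) (hc₁₂ : c₁ ≤ c₂)
    (hcount : ∀ r : ℝ, 1 ≤ r →
      c₁ * r ^ d ≤ (({h : G | h ∈ H ∧ N h ≤ r}).ncard : ℝ) ∧
      (({h : G | h ∈ H ∧ N h ≤ r}).ncard : ℝ) ≤ c₂ * r ^ d)
    (φ : ℝ → ℝ) (hφpos : ∀ t : ℝ, 0 ≤ t → 0 < φ t)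
    (hφmono : MonotoneOn φ (Set.Ici 0))
    (γ : ℝ) (hγ : 0 < γ) (hφreg : RegVaryAt φ γ)
    (μ : G → ℝ) (hμ : IsSymmProb μ) (hμsupp : ∀ g, g ∉ H → μ g = 0)
    (c₃ c₄ : ℝ) (hc₃ : 0 < c₃) (hc₃₄ : c₃ ≤ c₄)
    (hμcomp : ∀ h ∈ H, c₃ ≤ μ h * φ (1 + N h) * (1 + N h) ^ d ∧
      μ h * φ (1 + N h) * (1 + N h) ^ d ≤ c₄) :
    ∃ a₁ a₂ a₃ a₄ : ℝ, 0 < a₁ ∧ 0 < a₂ ∧ 0 < a₃ ∧ 0 < a₄ ∧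
      ∀ r : ℝ, 1 ≤ r →
        a₁ / φ (a₂ * r) ≤ (∑' h : {x : G // x ∈ H ∧ r ≤ N x}, μ (h : G)) ∧
        (∑' h : {x : G // x ∈ H ∧ r ≤ N x}, μ (h : G)) ≤ a₃ / φ (a₄ * r) := by
  obtain ⟨hμ0, hμs, hμ1, -⟩ := hμ
  have hc₄ : 0 < c₄ := hc₃.trans_le hc₃₄
  have hc₂ : 0 < c₂ := hc₁.trans_le hc₁₂
  -- An infinite ball would have junk `ncard = 0`, against the lower volume bound.
  have hfin : ∀ r : ℝ, 1 ≤ r → {h : G | h ∈ H ∧ N h ≤ r}.Finite := by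
    intro r hr
    by_contra hinf
    have h := (hcount r hr).1
    rw [Set.Infinite.ncard hinf] at h
    have : 0 < c₁ * r ^ d := mul_pos hc₁ (Real.rpow_pos_of_pos (by linarith) d)
    simp only [Nat.cast_zero] at h
    linarith
  obtain ⟨q, T, hq, hT, hgrow⟩ := exists_growth hφpos hγ hφreg
  -- The choice of `K` makes `c₁ * (K * r) ^ d - c₂ * r ^ d = r ^ d`.
  set K : ℝ := ((c₂ + 1) / c₁) ^ (1 / d) with hK
  have hKd : c₁ * K ^ d = c₂ + 1 := by
    rw [hK, ← Real.rpow_mul (by positivity), one_div_mul_cancel hd.ne', Real.rpow_one]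
    field_simp
  have hK1 : 1 ≤ K := Real.one_le_rpow (by rw [le_div_iff₀ hc₁]; linarith) (by positivity)
  set C : ℝ := c₄ * c₂ * 2 ^ d with hCdef
  have hC : 0 < C := by positivity
  have hq1 : 0 < q - 1 := by linarith
  refine ⟨c₃ / (1 + K) ^ d, 1 + K, max (C * q / (q - 1)) (φ T), 1, by positivity, by positivity,
    lt_max_of_lt_left (by positivity), one_pos, fun r hr => ⟨?_, ?_⟩⟩
  · have hr0 : 0 < r := by linarith
    have hKr : 1 ≤ K * r := one_le_mul_of_one_le_of_one_le hK1 hr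
    set F : Finset G := (hfin (K * r) hKr).toFinset \ (hfin r hr).toFinset with hF
    have hmem : ∀ x ∈ F, x ∈ H ∧ r < N x ∧ N x ≤ K * r := by
      intro x hx
      simp only [hF, Finset.mem_sdiff, Set.Finite.mem_toFinset, Set.mem_ofPred_eq, not_and,
        not_le] at hx
      exact ⟨hx.1.1, hx.2 hx.1.1, hx.1.2⟩
    have hcard : r ^ d ≤ (F.card : ℝ) := by
      have h1 := (hcount (K * r) hKr).1
      have h2 := (hcount r hr).2
      rw [Set.ncard_eq_toFinset_card _ (hfin _ hKr)] at h1
      rw [Set.ncard_eq_toFinset_card _ (hfin _ hr)] at h2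
      have h3 : ((hfin (K * r) hKr).toFinset.card : ℝ) ≤ F.card + (hfin r hr).toFinset.card := by
        exact_mod_cast Finset.card_le_card_sdiff_add_card
      rw [Real.mul_rpow (by linarith) hr0.le, ← mul_assoc, hKd] at h1
      linarith
    have hφK := hφpos ((1 + K) * r) (by positivity)
    have hrd : 0 < r ^ d := Real.rpow_pos_of_pos hr0 d
    have hpt : ∀ x ∈ F, c₃ / (φ ((1 + K) * r) * ((1 + K) * r) ^ d) ≤ μ x := by
      intro x hx
      obtain ⟨hxH, h1, h2⟩ := hmem x hx
      rw [div_le_iff₀ (by positivity)]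
      refine (hμcomp x hxH).1.trans ?_
      rw [mul_assoc]
      refine mul_le_mul_of_nonneg_left ?_ (hμ0 x)
      have hle : 1 + N x ≤ (1 + K) * r := by linarith
      exact mul_le_mul (hφmono (by simp; linarith) (by simp; positivity) hle)
        (Real.rpow_le_rpow (by linarith) hle hd.le) (Real.rpow_nonneg (by linarith) _) hφK.le
    have htsum : ∑ x ∈ F, μ x ≤ ∑' h : {x : G // x ∈ H ∧ r ≤ N x}, μ (h : G) := by
      have e : ∑' h : {x : G // x ∈ H ∧ r ≤ N x}, μ (h : G)
          = ∑' x, Set.indicator {x : G | x ∈ H ∧ r ≤ N x} μ x :=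
        tsum_subtype {x : G | x ∈ H ∧ r ≤ N x} μ
      rw [e]
      calc ∑ x ∈ F, μ x = ∑ x ∈ F, Set.indicator {x : G | x ∈ H ∧ r ≤ N x} μ x :=
            Finset.sum_congr rfl fun x hx =>
              (Set.indicator_of_mem (s := {x : G | x ∈ H ∧ r ≤ N x})
                ⟨(hmem x hx).1, (hmem x hx).2.1.le⟩ μ).symm
        _ ≤ _ := (hμs.indicator _).sum_le_tsum _
              fun x _ => Set.indicator_nonneg (fun y _ => hμ0 y) x
    calc c₃ / (1 + K) ^ d / φ ((1 + K) * r)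
        = r ^ d * (c₃ / (φ ((1 + K) * r) * ((1 + K) * r) ^ d)) := by
          rw [Real.mul_rpow (by positivity) hr0.le]
          field_simp
      _ ≤ F.card * (c₃ / (φ ((1 + K) * r) * ((1 + K) * r) ^ d)) :=
          mul_le_mul_of_nonneg_right hcard (by positivity)
      _ = F.card • (c₃ / (φ ((1 + K) * r) * ((1 + K) * r) ^ d)) := (nsmul_eq_mul _ _).symm
      _ ≤ ∑ x ∈ F, μ x := Finset.card_nsmul_le_sum _ _ _ hpt
      _ ≤ _ := htsum
  · rw [one_mul]
    have hφr := hφpos r (by linarith)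
    rcases le_or_gt T r with hTr | hTr
    · refine le_trans ?_ (div_le_div_of_nonneg_right (le_max_left _ _) hφr.le)
      refine Real.tsum_le_of_sum_le (fun _ => hμ0 _) fun s => ?_
      have hmap : ∑ x ∈ s, μ (x : G)
          = ∑ x ∈ s.map (Function.Embedding.subtype fun x : G => x ∈ H ∧ r ≤ N x), μ x := by
        rw [Finset.sum_map]
        rfl
      rw [hmap]
      set s' : Finset G := s.map (Function.Embedding.subtype fun x : G => x ∈ H ∧ r ≤ N x)
        with hs'
      -- A finite set lies in finitely many dyadic annuli.
      obtain ⟨M, hM⟩ := (s'.image N).bddAbove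
      obtain ⟨n, hn⟩ := pow_unbounded_of_one_lt M (one_lt_two : (1 : ℝ) < 2)
      refine sum_tail_le (P := fun x => x ∈ H) (N := N) hφpos hC.le hq hT hgrow
        (fun r hr s hs => sum_annulus_le hd hfin (fun r hr => (hcount r hr).2) hφpos hφmono hμ0
          hc₄.le (fun h hh => (hμcomp h hh).2) hr s hs) n r hTr s' fun x hx => ?_
      have h1 : N x ≤ M := hM (by simpa using ⟨x, hx, rfl⟩)
      have h2 : x ∈ H ∧ r ≤ N x := by
        rw [hs', Finset.mem_map] at hx
        obtain ⟨y, -, rfl⟩ := hx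
        exact y.2
      have h3 : (2 : ℝ) ^ n ≤ 2 ^ n * r := le_mul_of_one_le_right (by positivity) hr
      exact ⟨h2.1, h2.2, by linarith⟩
    · refine le_trans ?_ (div_le_div_of_nonneg_right (le_max_right _ _) hφr.le)
      have h1 : ∑' h : {x : G // x ∈ H ∧ r ≤ N x}, μ (h : G) ≤ ∑' g, μ g :=
        hμs.tsum_subtype_le μ {x : G | x ∈ H ∧ r ≤ N x} hμ0
      rw [hμ1] at h1
      refine h1.trans ?_
      rw [le_div_iff₀ hφr, one_mul]
      exact hφmono (by simp; linarith) (by simp; linarith) hTr.le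
end
end
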